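/- For all t ∈ ℝ, h > 0 and u₁, u₂ ∈ 𝒮(ℝ^d): (e^{ithA}u₁, P u₂) - (P u₁, e^{-ithA} u₂) = h ∫₀^t ( e^{ithA} P_{sh} u₁, u₂ ) ds. Moreover, for each pair u₁, u₂ there is a constant C such that |(e^{ithA}u₁, P u₂) - (P u₁, e^{-ithA} u₂)| ≤ C |t| e^{h|t|} for all t ∈ ℝ. -/

import Mathlib

open MeasureTheory Filter Topology Complex
open scoped Real ENNReal FourierTransform ComplexConjugate

noncomputable section

/-- Euclidean space `ℝ^d`. -/
abbrev Ed (d : ℕ) : Type := EuclideanSpace ℝ (Fin d)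

/-- `L²(ℝ^d)` with complex values. -/
abbrev L2 (d : ℕ) := MeasureTheory.Lp ℂ 2 (volume : Measure (Ed d))

/-- The partial derivative `∂_j u`. -/
def pd (d : ℕ) (j : Fin d) (u : Ed d → ℂ) : Ed d → ℂ :=
  fun x => fderiv ℝ u x (EuclideanSpace.single j (1:ℝ))

/-- The operator `∑_{j,k} D_j (b_{jk} D_k) = - ∑_{j,k} ∂_j (b_{jk} ∂_k)` (complex
coefficients), applied to a function `u`. -/
def divGradC (d : ℕ) (b : Ed d → Fin d → Fin d → ℂ) (u : Ed d → ℂ) : Ed d → ℂ :=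
  fun x => -∑ j : Fin d, ∑ k : Fin d,
    fderiv ℝ (fun y => b y j k * fderiv ℝ u y (EuclideanSpace.single k (1:ℝ))) x
      (EuclideanSpace.single j (1:ℝ))

/-- `- div (G ∇ u) = ∑_{j,k} D_j (G_{jk} D_k) u` for a real coefficient matrix `G`. -/
def divGrad (d : ℕ) (G : Ed d → Fin d → Fin d → ℝ) (u : Ed d → ℂ) : Ed d → ℂ :=
  divGradC d (fun x j k => (G x j k : ℂ)) u

/-- The operation `a ↦ x·∇a` on real valued functions. -/
def xdotOp (d : ℕ) : (Ed d → ℝ) → Ed d → ℝ := fun a x => fderiv ℝ a x x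

/-- The operation `a ↦ x·∇a` on complex valued functions. -/
def xdotC (d : ℕ) : (Ed d → ℂ) → Ed d → ℂ := fun a x => fderiv ℝ a x x

/-- `a ∈ C_b^∞(ℝ^d)`: smooth with all derivatives bounded. -/
def CbSmooth (d : ℕ) (a : Ed d → ℝ) : Prop :=
  ContDiff ℝ (⊤ : ℕ∞) a ∧ ∀ n : ℕ, ∃ C : ℝ, ∀ x, ‖iteratedFDeriv ℝ n a x‖ ≤ C

/-- `a ∈ S_dil(ℝ^d)` : `a ∈ C_b^∞` and `(x·∇)^n a ∈ L^∞` for all `n`. -/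
def MemSdil (d : ℕ) (a : Ed d → ℝ) : Prop :=
  CbSmooth d a ∧ ∀ n : ℕ, ∃ C : ℝ, ∀ x, |(xdotOp d)^[n] a x| ≤ C

/-- Complex-valued version of `S_dil(ℝ^d)`. -/
def MemSdilC (d : ℕ) (a : Ed d → ℂ) : Prop :=
  (ContDiff ℝ (⊤ : ℕ∞) a ∧ ∀ n : ℕ, ∃ C : ℝ, ∀ x, ‖iteratedFDeriv ℝ n a x‖ ≤ C) ∧
  ∀ n : ℕ, ∃ C : ℝ, ∀ x, ‖(xdotC d)^[n] a x‖ ≤ C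

/-- The coefficient matrix is symmetric with real entries. -/
def SymmetricCoef (d : ℕ) (G : Ed d → Fin d → Fin d → ℝ) : Prop := ∀ x j k, G x j k = G x k j

/-- Uniform ellipticity: `Λ₊ ≥ G(x) ≥ Λ₋ > 0` as quadratic forms. -/
def UniformlyElliptic (d : ℕ) (G : Ed d → Fin d → Fin d → ℝ) : Prop :=
  ∃ lam Lam : ℝ, 0 < lam ∧ ∀ (x : Ed d) (v : Fin d → ℝ),
    lam * ∑ j, v j ^ 2 ≤ (∑ j, ∑ k, G x j k * v j * v k) ∧
      (∑ j, ∑ k, G x j k * v j * v k) ≤ Lam * ∑ j, v j ^ 2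

/-- The standing assumptions of the paper: `G` symmetric with entries in `C_b^∞`,
uniformly elliptic. -/
def Standing (d : ℕ) (G : Ed d → Fin d → Fin d → ℝ) : Prop :=
  (∀ j k, CbSmooth d fun x => G x j k) ∧ SymmetricCoef d G ∧ UniformlyElliptic d G

/-- `G = I_d + H`. -/
def Gmat (d : ℕ) (H : Ed d → Fin d → Fin d → ℝ) : Ed d → Fin d → Fin d → ℝ :=
  fun x j k => (if j = k then 1 else 0) + H x j k

/-- Long range condition `|∂^α (G - I_d)| ≤ C_α ⟨x⟩^{-μ-|α|}`. -/
def LongRange (d : ℕ) (G : Ed d → Fin d → Fin d → ℝ) (μ : ℝ) : Prop :=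
  ∀ (j k : Fin d) (n : ℕ), ∃ C : ℝ, ∀ x : Ed d,
    ‖iteratedFDeriv ℝ n (fun y => G y j k - if j = k then (1:ℝ) else 0) x‖
      ≤ C * ((1 + ‖x‖ ^ 2) ^ (-(μ + n) / 2) : ℝ)

/-- `R` is the resolvent `(P - z)⁻¹` of the self-adjoint realization of
`P = - div (G ∇·)`: for every `f ∈ L²`, `g = R f` solves `(P - z) g = f` in the sense
of distributions (this characterizes the resolvent uniquely). -/
def IsWeakResolvent (d : ℕ) (G : Ed d → Fin d → Fin d → ℝ) (z : ℂ)
    (R : L2 d →L[ℂ] L2 d) : Prop :=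
  ∀ (f : L2 d) (φ : SchwartzMap (Ed d) ℂ),
    (∫ x, (R f) x * divGrad d G (⇑φ) x) - z * (∫ x, (R f) x * φ x) = ∫ x, f x * φ x

/-- The japanese bracket weight `⟨x⟩^s = (1+|x|²)^{s/2}`. -/
def jweight (d : ℕ) (s : ℝ) : Ed d → ℝ := fun x => (1 + ‖x‖ ^ 2) ^ (s / 2)

/-- The dilation group `(e^{itA} u)(x) = e^{td/2} u(e^t x)`, where
`A = (x·∇ + ∇·x)/(2i)` is the generator of dilations. -/
def dil (d : ℕ) (t : ℝ) (u : Ed d → ℂ) : Ed d → ℂ :=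
  fun x => (Real.exp (t * d / 2) : ℂ) * u (Real.exp t • x)

/-- The `L²` inner product of two functions (conjugate linear in the first variable,
as is Mathlib's convention). -/
def pairL2 (d : ℕ) (u v : Ed d → ℂ) : ℂ := ∫ x : Ed d, (starRingEnd ℂ) (u x) * v x

/-- The resolvent `(hA - z)⁻¹ = (1/i) ∫₀^{±∞} e^{-itz} e^{ithA} dt` (`± Im z < 0`) of the
(rescaled) generator of dilations, realized by its defining integral formula. -/
def resDil (d : ℕ) (h : ℝ) (z : ℂ) (u : Ed d → ℂ) : Ed d → ℂ := fun x =>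
  if z.im < 0 then
    Complex.I⁻¹ * ∫ t in Set.Ici (0:ℝ), Complex.exp (-(Complex.I * t * z)) * dil d (t * h) u x
  else
    -Complex.I⁻¹ * ∫ t in Set.Iic (0:ℝ), Complex.exp (-(Complex.I * t * z)) * dil d (t * h) u x

/-- `sin(τ A) u = (e^{iτA} - e^{-iτA}) u / (2i)`. -/
def sinA (d : ℕ) (τ : ℝ) (u : Ed d → ℂ) : Ed d → ℂ :=
  fun x => (dil d τ u x - dil d (-τ) u x) / (2 * Complex.I)

/-- `F(hA) = arctan(hA)` realized through `arctan λ = ∫₀^∞ sin(tλ) e^{-t} dt / t`. -/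
def arctanA (d : ℕ) (h : ℝ) (u : Ed d → ℂ) : Ed d → ℂ :=
  fun x => ∫ t in Set.Ioi (0:ℝ), ((Real.exp (-t) / t : ℝ) : ℂ) * sinA d (t * h) u x

/-- Coefficients of the commutator `i[P,A] = ∑ D_j (2G_{jk} - x·∇G_{jk}) D_k`. -/
def commCoef (d : ℕ) (G : Ed d → Fin d → Fin d → ℝ) : Ed d → Fin d → Fin d → ℝ :=
  fun x j k => 2 * G x j k - xdotOp d (fun y => G y j k) x

/-- `P_τ = e^{-iτA} (i[P,A]) e^{iτA}` applied to a function. -/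
def ptauFun (d : ℕ) (G : Ed d → Fin d → Fin d → ℝ) (τ : ℝ) (u : Ed d → ℂ) : Ed d → ℂ :=
  dil d (-τ) (divGrad d (commCoef d G) (dil d τ u))

/-- Coefficients of `P_τ = e^{-iτA} (i[P,A]) e^{iτA}` for `P = -div((I+H)∇)`;
indeed `e^{-iτA} (∑ D_j b D_k) e^{iτA} = e^{2τ} ∑ D_j b(e^{-τ}x) D_k`. -/
def ptauCoef (d : ℕ) (H : Ed d → Fin d → Fin d → ℝ) (τ : ℝ) : Ed d → Fin d → Fin d → ℝ :=
  fun x j k => Real.exp (2 * τ) * commCoef d (Gmat d H) (Real.exp (-τ) • x) j k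

/-- Coefficients of `Q_s = ∫₀¹ (d P_τ / dτ)|_{τ=σs} dσ`. -/
def qCoef (d : ℕ) (H : Ed d → Fin d → Fin d → ℝ) (s : ℝ) : Ed d → Fin d → Fin d → ℝ :=
  fun x j k => ∫ σ in (0:ℝ)..(1:ℝ), deriv (fun τ => ptauCoef d H τ x j k) (σ * s)

/-- Coefficients of `B_τ = τ ∫₀¹ s Q_{sτ} ds`. -/
def bCoef (d : ℕ) (H : Ed d → Fin d → Fin d → ℝ) (τ : ℝ) : Ed d → Fin d → Fin d → ℝ :=
  fun x j k => τ * ∫ s in (0:ℝ)..(1:ℝ), s * qCoef d H (s * τ) x j k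

/-- The Fourier multiplier `|D|` (with symbol `|ξ|`). -/
def absD (d : ℕ) (u : Ed d → ℂ) : Ed d → ℂ :=
  fun x => 𝓕⁻ (fun ξ : Ed d => (‖ξ‖ : ℂ) * 𝓕 u ξ) x

/-- `‖ |D| w ‖_{L²}`, computed on the Fourier side (Plancherel). -/
def Dnorm (d : ℕ) (w : Ed d → ℂ) : ℝ :=
  (eLpNorm (fun ξ : Ed d => (‖ξ‖ : ℂ) * 𝓕 w ξ) 2 volume).toReal

/-- A general Fourier multiplier `ρ(D)`. -/
def multD (d : ℕ) (ρ : Ed d → ℂ) (u : Ed d → ℂ) : Ed d → ℂ :=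
  fun x => 𝓕⁻ (fun ξ : Ed d => ρ ξ * 𝓕 u ξ) x

/-- The operator `A = (x·∇ + ∇·x)/(2i) = (x·∇ + d/2)/i` applied to a function. -/
def opA (d : ℕ) (u : Ed d → ℂ) : Ed d → ℂ :=
  fun x => (fderiv ℝ u x x + (d / 2 : ℂ) * u x) / Complex.I

/-- The functions `F_ν(λ) = ∫₀^∞ sin(tλ) t/(t²+ν²) e^{-t} dt` approximating `arctan`. -/
def Fnu (ν lam : ℝ) : ℝ :=
  ∫ t in Set.Ioi (0:ℝ), Real.sin (t * lam) * (t / (t ^ 2 + ν ^ 2)) * Real.exp (-t)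

/-- `m`-admissible family in `S_dil(ℝ^d)`:
`‖∂_τ^k (x·∇)^n b_τ‖_{L^∞} ≤ C_{kn} e^{m|τ|}` for all `k, n`. -/
def AdmissibleCoeff (d : ℕ) (m : ℕ) (b : ℝ → Ed d → ℂ) : Prop :=
  (∀ τ, MemSdilC d (b τ)) ∧
  (∀ (n : ℕ) (x : Ed d), ContDiff ℝ (⊤ : ℕ∞) fun τ => (xdotC d)^[n] (b τ) x) ∧
  ∀ k n : ℕ, ∃ C : ℝ, ∀ (τ : ℝ) (x : Ed d),
    ‖iteratedDeriv k (fun σ => (xdotC d)^[n] (b σ) x) τ‖ ≤ C * Real.exp (m * |τ|)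

/-- `m`-admissible family of differential operators `B_τ = ∑ D_j b_{jk,τ} D_k`. -/
def AdmissibleOp (d : ℕ) (m : ℕ) (B : ℝ → Ed d → Fin d → Fin d → ℂ) : Prop :=
  ∀ j k, AdmissibleCoeff d m fun τ x => B τ x j k

/-- Functions that are continuous and bounded on `[0,∞)` (the spectrum of `P`). -/
def GoodSymbol (φ : ℝ → ℂ) : Prop :=
  Continuous φ ∧ ∃ C : ℝ, ∀ lam : ℝ, 0 ≤ lam → ‖φ lam‖ ≤ C

/-- The (continuous bounded) functional calculus `φ ↦ φ(P)` of the nonnegative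
self-adjoint operator `P = -div(G∇)`, characterized by: it is linear and
multiplicative on continuous functions bounded on `[0,∞) ⊇ spec(P)`, compatible with
sup-norm bounds and adjoints, only depends on the restriction of the symbol to
`[0,∞)`, and sends `λ ↦ (λ - z)⁻¹` to the resolvent `(P - z)⁻¹`.  These properties
determine `φ(P)` uniquely for every `φ` continuous and vanishing at infinity.
Moreover `0` is not an eigenvalue of `P` (field `ker_triv`). -/
structure SpectralCalc (d : ℕ) (G : Ed d → Fin d → Fin d → ℝ) where
  map : (ℝ → ℂ) → (L2 d →L[ℂ] L2 d)
  map_congr : ∀ φ ψ, GoodSymbol φ → GoodSymbol ψ →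
    (∀ lam : ℝ, 0 ≤ lam → φ lam = ψ lam) → map φ = map ψ
  map_add : ∀ φ ψ, GoodSymbol φ → GoodSymbol ψ →
    map (fun lam => φ lam + ψ lam) = map φ + map ψ
  map_smul : ∀ (c : ℂ) φ, GoodSymbol φ → map (fun lam => c * φ lam) = c • map φ
  map_mul : ∀ φ ψ, GoodSymbol φ → GoodSymbol ψ →
    map (fun lam => φ lam * ψ lam) = (map φ).comp (map ψ)
  map_norm : ∀ (φ) (C : ℝ), (∀ lam : ℝ, 0 ≤ lam → ‖φ lam‖ ≤ C) → ‖map φ‖ ≤ C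
  map_star : ∀ φ, GoodSymbol φ →
    ContinuousLinearMap.adjoint (map φ) = map (fun lam => (starRingEnd ℂ) (φ lam))
  map_resolvent : ∀ z : ℂ, z.im ≠ 0 →
    IsWeakResolvent d G z (map fun lam => ((lam : ℂ) - z)⁻¹)
  ker_triv : ∀ f : L2 d,
    (∀ φ : SchwartzMap (Ed d) ℂ, (∫ x, f x * divGrad d G (⇑φ) x) = 0) → f = 0

/-- `Rj = ∂_j P^{-1/2}` is the `j`-th Riesz transform of `P`, defined as the strong
limit `s-lim_n π^{-1/2} ∂_j ∫_{1/n}^n e^{-tP} dt/√t`; here `gn n` is the vector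
integral `∫_{1/n}^n e^{-tP} f dt/√t` and `wn n` is its distributional `∂_j`
derivative. -/
def RieszOf (d : ℕ) (G : Ed d → Fin d → Fin d → ℝ) (S : SpectralCalc d G) (j : Fin d)
    (Rj : L2 d →L[ℂ] L2 d) : Prop :=
  ∀ (f : L2 d) (gn wn : ℕ → L2 d),
    (∀ n : ℕ, gn n = ∫ t in Set.Icc ((n : ℝ)⁻¹) (n : ℝ),
        ((Real.sqrt t)⁻¹ : ℝ) • (S.map (fun lam => Complex.exp (-(t : ℂ) * ((max lam 0 : ℝ) : ℂ))) f)) →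
    (∀ (n : ℕ) (φ : SchwartzMap (Ed d) ℂ),
        (∫ x, (wn n) x * φ x) = -∫ x, (gn n) x * pd d j (⇑φ) x) →
    Tendsto (fun n : ℕ => ((Real.sqrt Real.pi)⁻¹ : ℝ) • wn n) atTop (𝓝 (Rj f))

/-!
Conjugation by dilations acts on coefficients: `e^{-iσA} (∑ D_j b_{jk} D_k) e^{iσA}` has the
coefficients `e^{2σ} b(e^{-σ}x)`. For `b = G` their derivative in `σ` is the coefficient matrix of
`P_σ`, so `e^{-iTA} P e^{iTA} - P = ∫₀ᵀ P_σ dσ` when tested against Schwartz functions. The symmetry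
of `P` and the unitarity of `e^{iTA}` turn this into the formula, with `T = th`.

For the bound, integrate by parts so that `u₁` and `e^{-iTA} u₂` each carry one derivative in
`(P_σ u₁, e^{-iTA} u₂)`. The coefficients of `P_σ` are `O(e^{2σ} + e^{σ}|x|)` and the derivative of
`e^{-iTA} u₂` contributes a factor `e^{-T}`. For `σ` between `0` and `T` both `2σ - T` and `σ - T`
are at most `|T|`, so the product is `O(e^{|T|} (1 + |x|))`, and the weight is absorbed by `∂u₁`.
-/

section Analysis

lemma intervalIntegral_integral_deriv_eq_integral_sub {α E : Type*} [MeasurableSpace α]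
    {μ : Measure α} [SFinite μ] [NormedAddCommGroup E] [NormedSpace ℝ E] [CompleteSpace E]
    {F F' : ℝ → α → E} {bound : α → ℝ} {a b : ℝ}
    (hderiv : ∀ x, ∀ σ ∈ Set.uIcc a b, HasDerivAt (F · x) (F' σ x) σ)
    (hmeas : AEStronglyMeasurable (Function.uncurry F') ((volume.restrict (Set.uIoc a b)).prod μ))
    (hbound : ∀ x, ∀ σ ∈ Set.uIoc a b, ‖F' σ x‖ ≤ bound x) (hint : Integrable bound μ) :
    ∫ σ in a..b, ∫ x, F' σ x ∂μ = ∫ x, (F b x - F a x) ∂μ := by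
  have hprod : Integrable (Function.uncurry F') ((volume.restrict (Set.uIoc a b)).prod μ) := by
    have : IsFiniteMeasure ((volume : Measure ℝ).restrict (Set.uIoc a b)) :=
      ⟨by simp [Set.uIoc]⟩
    refine (hint.comp_snd _).mono' hmeas ?_
    have hmem : ∀ᵐ σ ∂(volume : Measure ℝ).restrict (Set.uIoc a b), σ ∈ Set.uIoc a b :=
      ae_restrict_mem measurableSet_uIoc
    filter_upwards [Measure.quasiMeasurePreserving_fst.ae hmem] with p hp using hbound p.2 p.1 hp
  rw [intervalIntegral_integral_swap hprod]
  refine integral_congr_ae ?_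
  filter_upwards [hprod.prod_left_ae] with x hx
  exact intervalIntegral.integral_eq_sub_of_hasDerivAt (hderiv x)
    (intervalIntegrable_iff.2 hx)

lemma integrable_one_add_norm_pow_mul {D V : Type*} [NormedAddCommGroup D] [NormedSpace ℝ D]
    [MeasurableSpace D] [BorelSpace D] [SecondCountableTopology D] [NormedAddCommGroup V]
    [NormedSpace ℝ V] (μ : Measure D) [μ.HasTemperateGrowth] (f : SchwartzMap D V) (n : ℕ) :
    Integrable (fun x => (1 + ‖x‖) ^ n * ‖f x‖) μ := by
  simp_rw [add_pow, one_pow, one_mul, Finset.sum_mul]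
  refine integrable_finsetSum _ fun m _ => ?_
  simpa only [mul_right_comm] using (f.integrable_pow_mul μ (n - m)).mul_const (n.choose m : ℝ)

lemma hasTemperateGrowth_fderiv {E F : Type*} [NormedAddCommGroup E] [NormedSpace ℝ E]
    [NormedAddCommGroup F] [NormedSpace ℝ F] {f : E → F} (hf : f.HasTemperateGrowth) :
    (fderiv ℝ f).HasTemperateGrowth :=
  ⟨hf.1.fderiv_right (by simp), fun n => by
    simpa only [norm_iteratedFDeriv_fderiv] using hf.2 (n + 1)⟩

end Analysis

variable {d : ℕ}

section Dilations

lemma dil_zero (u : Ed d → ℂ) : dil d 0 u = u := by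
  funext x
  simp [dil]

lemma dil_dil (s t : ℝ) (u : Ed d → ℂ) : dil d s (dil d t u) = dil d (s + t) u := by
  funext x
  simp only [dil, smul_smul, ← mul_assoc, ← Real.exp_add, ← Complex.ofReal_mul]
  congr 4 <;> ring

lemma pairL2_dil_dil (s : ℝ) (u v : Ed d → ℂ) :
    pairL2 d (dil d s u) (dil d s v) = pairL2 d u v := by
  have hexp : Real.exp (s * d / 2) * Real.exp (s * d / 2) = Real.exp s ^ d := by
    rw [← Real.exp_add, ← Real.exp_nat_mul]
    ring_nf
  calc pairL2 d (dil d s u) (dil d s v)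
      = ∫ x, ((Real.exp s ^ d : ℝ) : ℂ) *
          (conj (u (Real.exp s • x)) * v (Real.exp s • x)) := by
        refine integral_congr_ae (Eventually.of_forall fun x => ?_)
        simp only [dil, map_mul, Complex.conj_ofReal, ← hexp, Complex.ofReal_mul]
        ring
    _ = pairL2 d u v := by
        rw [integral_const_mul, Measure.integral_comp_smul_of_nonneg volume
          (fun x => conj (u x) * v x) _ (hR := (Real.exp_pos s).le), finrank_euclideanSpace,
          Fintype.card_fin, Complex.real_smul, ← mul_assoc, ← Complex.ofReal_mul,
          mul_inv_cancel₀ (pow_ne_zero _ (Real.exp_ne_zero s)), Complex.ofReal_one, one_mul, pairL2]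

lemma pairL2_dil_left (s : ℝ) (u v : Ed d → ℂ) :
    pairL2 d (dil d s u) v = pairL2 d u (dil d (-s) v) := by
  rw [← pairL2_dil_dil s u, dil_dil, add_neg_cancel, dil_zero]

lemma integral_norm_sq_dil (s : ℝ) (u : Ed d → ℂ) :
    ∫ x, ‖dil d s u x‖ ^ 2 = ∫ x, ‖u x‖ ^ 2 := by
  have hpair (v : Ed d → ℂ) : pairL2 d v v = ((∫ x, ‖v x‖ ^ 2 : ℝ) : ℂ) := by
    simp only [pairL2, Complex.conj_mul', ← Complex.ofReal_pow, integral_complex_ofReal]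
  exact_mod_cast hpair u ▸ hpair (dil d s u) ▸ pairL2_dil_dil s u u

lemma pd_dil (s : ℝ) (u : Ed d → ℂ) (j : Fin d) (x : Ed d) :
    pd d j (dil d s u) x = Real.exp s * dil d s (pd d j u) x := by
  have hdil : dil d s u = (Real.exp (s * d / 2) : ℂ) • fun y => u (Real.exp s • y) := rfl
  simp only [pd, dil, hdil, fderiv_const_smul_field, fderiv_comp_smul, Pi.smul_apply,
    smul_apply, smul_eq_mul, Complex.real_smul]
  ring

/-- The dilation `e^{isA}` as an operation on Schwartz functions. -/
def dilSchwartz (s : ℝ) (u : SchwartzMap (Ed d) ℂ) : SchwartzMap (Ed d) ℂ :=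
  (Real.exp (s * d / 2) : ℂ) • SchwartzMap.compCLMOfContinuousLinearEquiv ℂ
    (ContinuousLinearEquiv.smulLeft (Units.mk0 (Real.exp s) (Real.exp_ne_zero s))) u

lemma coe_dilSchwartz (s : ℝ) (u : SchwartzMap (Ed d) ℂ) : ⇑(dilSchwartz s u) = dil d s u := by
  funext x
  simp [dilSchwartz, dil]

end Dilations

section QuadraticForm

open scoped LineDeriv

/-- The map `(a, b) ↦ conj a * b`, the pointwise ingredient of `pairL2`, regarded as bilinear
over `ℝ`. -/
def conjMulCLM : ℂ →L[ℝ] ℂ →L[ℝ] ℂ :=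
  ContinuousLinearMap.mul ℝ ℂ ∘L (Complex.conjCLE : ℂ →L[ℝ] ℂ)

lemma conjMulCLM_apply (a b : ℂ) : conjMulCLM a b = conj a * b := by
  simp [conjMulCLM]

/-- The partial derivative `∂_j` as an operation on Schwartz functions. -/
def pdSchwartz (j : Fin d) (u : SchwartzMap (Ed d) ℂ) : SchwartzMap (Ed d) ℂ :=
  ∂_{(EuclideanSpace.single j (1 : ℝ) : Ed d)} u

lemma coe_pdSchwartz (j : Fin d) (u : SchwartzMap (Ed d) ℂ) : ⇑(pdSchwartz j u) = pd d j u :=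
  rfl

lemma integrable_conj_mul (f g : SchwartzMap (Ed d) ℂ) :
    Integrable fun x => conj (f x) * g x := by
  simpa only [SchwartzMap.pairing_apply, conjMulCLM_apply] using
    (SchwartzMap.pairing conjMulCLM f g).integrable (μ := volume)

lemma integral_conj_pd_mul (f g : SchwartzMap (Ed d) ℂ) (j : Fin d) :
    ∫ x, conj (pd d j f x) * g x = -∫ x, conj (f x) * pd d j g x := by
  have hparts := SchwartzMap.integral_bilinear_lineDerivOp_right_eq_neg_left (μ := volume) f g
    conjMulCLM (EuclideanSpace.single j (1 : ℝ))
  simp only [conjMulCLM_apply] at hparts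
  exact neg_eq_iff_eq_neg.1 hparts.symm

/-- The density `∑_{j,k} b_{jk} conj(∂_k u) ∂_j v` of the sesquilinear form of
`∑_{j,k} D_j b_{jk} D_k`. -/
def formDensity (d : ℕ) (b : Ed d → Fin d → Fin d → ℝ) (u v : Ed d → ℂ) : Ed d → ℂ :=
  fun x => ∑ j, ∑ k, (b x j k : ℂ) * (conj (pd d k u x) * pd d j v x)

section

variable {b : Ed d → Fin d → Fin d → ℝ} (hb : ∀ j k, (fun x => b x j k).HasTemperateGrowth)
  (f g : SchwartzMap (Ed d) ℂ)
include hb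

lemma divGrad_apply_schwartz (x : Ed d) :
    divGrad d b f x = -∑ j, ∑ k,
      pdSchwartz j (SchwartzMap.smulLeftCLM ℂ (fun y => b y j k) (pdSchwartz k f)) x := by
  simp only [coe_pdSchwartz, divGrad, divGradC, pd, SchwartzMap.smulLeftCLM_apply (hb _ _)]
  rfl

lemma integrable_formDensity_term (j k : Fin d) :
    Integrable fun x => (b x j k : ℂ) * (conj (pd d k f x) * pd d j g x) := by
  simpa only [SchwartzMap.smulLeftCLM_apply_apply (hb j k), Complex.real_smul, map_mul,
    Complex.conj_ofReal, mul_assoc] using! integrable_conj_mul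
      (SchwartzMap.smulLeftCLM ℂ (fun y => b y j k) (pdSchwartz k f)) (pdSchwartz j g)

lemma integrable_formDensity : Integrable (formDensity d b f g) :=
  integrable_finsetSum _ fun j _ => integrable_finsetSum _ fun k _ =>
    integrable_formDensity_term hb f g j k

lemma pairL2_divGrad_left : pairL2 d (divGrad d b f) g = ∫ x, formDensity d b f g x := by
  let flux (j k : Fin d) := SchwartzMap.smulLeftCLM ℂ (fun y => b y j k) (pdSchwartz k f)
  have hflux (j k : Fin d) : -∫ x, conj (pdSchwartz j (flux j k) x) * g x =
      ∫ x, (b x j k : ℂ) * (conj (pd d k f x) * pd d j g x) := by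
    rw [coe_pdSchwartz, integral_conj_pd_mul, neg_neg]
    simp only [flux, SchwartzMap.smulLeftCLM_apply_apply (hb j k), Complex.real_smul, map_mul,
      Complex.conj_ofReal, mul_assoc, coe_pdSchwartz]
  simp only [pairL2, divGrad_apply_schwartz hb, map_neg, map_sum, neg_mul, Finset.sum_mul,
    formDensity]
  rw [integral_neg, integral_finsetSum _ fun j _ => integrable_finsetSum _ fun k _ =>
      integrable_conj_mul _ _,
    integral_finsetSum _ fun j _ => integrable_finsetSum _ fun k _ =>
      integrable_formDensity_term hb f g j k, ← Finset.sum_neg_distrib]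
  refine Finset.sum_congr rfl fun j _ => ?_
  rw [integral_finsetSum _ fun k _ => integrable_conj_mul _ _,
    integral_finsetSum _ fun k _ => integrable_formDensity_term hb f g j k,
    ← Finset.sum_neg_distrib]
  exact Finset.sum_congr rfl fun k _ => hflux j k

lemma pairL2_divGrad_comm (hsymm : SymmetricCoef d b) :
    pairL2 d f (divGrad d b g) = pairL2 d (divGrad d b f) g := by
  have hconj : pairL2 d f (divGrad d b g) = conj (pairL2 d (divGrad d b g) f) := by
    simp only [pairL2, ← integral_conj, map_mul, Complex.conj_conj, mul_comm]
  rw [hconj, pairL2_divGrad_left hb, pairL2_divGrad_left hb, ← integral_conj]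
  congr 1 with x
  simp only [formDensity, map_sum, map_mul, Complex.conj_ofReal, Complex.conj_conj]
  rw [Finset.sum_comm]
  refine Finset.sum_congr rfl fun j _ => Finset.sum_congr rfl fun k _ => ?_
  rw [hsymm x k j, mul_comm (pd d j g x)]

end

end QuadraticForm

section Coefficients

/-- The coefficients `e^{2σ} b(e^{-σ}x)` of `e^{-iσA} (∑ D_j b_{jk} D_k) e^{iσA}`; see
`dil_neg_divGrad_dil`. -/
def dilCoef (d : ℕ) (σ : ℝ) (b : Ed d → Fin d → Fin d → ℝ) : Ed d → Fin d → Fin d → ℝ :=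
  fun x j k => Real.exp (2 * σ) * b (Real.exp (-σ) • x) j k

lemma dilCoef_zero (b : Ed d → Fin d → Fin d → ℝ) : dilCoef d 0 b = b := by
  funext x j k
  simp [dilCoef]

lemma divGrad_dil (σ : ℝ) (b : Ed d → Fin d → Fin d → ℝ) (u : Ed d → ℂ) :
    divGrad d b (dil d σ u) = dil d σ (divGrad d (dilCoef d σ b) u) := by
  funext x
  have hflux (j k : Fin d) : (fun y => (b y j k : ℂ) * pd d k (dil d σ u) y) =
      dil d σ ((Real.exp (-σ) : ℂ) • fun y => (dilCoef d σ b y j k : ℂ) * pd d k u y) := by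
    have hexp : (Real.exp (-σ) : ℂ) * Real.exp (2 * σ) = Real.exp σ := by
      rw [← Complex.ofReal_mul, ← Real.exp_add]
      ring_nf
    funext y
    have hpoint : Real.exp (-σ) • Real.exp σ • y = y := by
      rw [smul_smul, ← Real.exp_add, neg_add_cancel, Real.exp_zero, one_smul]
    simp only [pd_dil, dil, dilCoef, Pi.smul_apply, smul_eq_mul, hpoint, Complex.ofReal_mul,
      ← hexp]
    ring
  have hterm (j k : Fin d) : pd d j (fun y => (b y j k : ℂ) * pd d k (dil d σ u) y) x =
      dil d σ (pd d j fun y => (dilCoef d σ b y j k : ℂ) * pd d k u y) x := by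
    have hexp : (Real.exp σ : ℂ) * Real.exp (-σ) = 1 := by
      rw [← Complex.ofReal_mul, ← Real.exp_add, add_neg_cancel, Real.exp_zero, Complex.ofReal_one]
    rw [hflux, pd_dil]
    simp only [pd, dil, fderiv_const_smul_field, Pi.smul_apply, smul_apply, smul_eq_mul]
    linear_combination (Real.exp (σ * d / 2) * fderiv ℝ
      (fun y => (dilCoef d σ b y j k : ℂ) * fderiv ℝ u y (EuclideanSpace.single k 1))
      (Real.exp σ • x) (EuclideanSpace.single j 1)) * hexp
  calc divGrad d b (dil d σ u) x
      = -∑ j, ∑ k, pd d j (fun y => (b y j k : ℂ) * pd d k (dil d σ u) y) x := rfl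
    _ = dil d σ (divGrad d (dilCoef d σ b) u) x := by
        simp only [hterm, dil, ← Finset.mul_sum, ← mul_neg]
        rfl

lemma dil_neg_divGrad_dil (σ : ℝ) (b : Ed d → Fin d → Fin d → ℝ) (u : Ed d → ℂ) :
    dil d (-σ) (divGrad d b (dil d σ u)) = divGrad d (dilCoef d σ b) u := by
  rw [divGrad_dil, dil_dil, neg_add_cancel, dil_zero]

lemma ptauFun_eq_divGrad (G : Ed d → Fin d → Fin d → ℝ) (τ : ℝ) (u : Ed d → ℂ) :
    ptauFun d G τ u = divGrad d (dilCoef d τ (commCoef d G)) u :=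
  dil_neg_divGrad_dil τ _ u

section

variable {b : Ed d → Fin d → Fin d → ℝ} {j k : Fin d}

lemma hasTemperateGrowth_dilCoef (σ : ℝ) (hb : (fun x => b x j k).HasTemperateGrowth) :
    (fun x => dilCoef d σ b x j k).HasTemperateGrowth :=
  (Function.HasTemperateGrowth.const _).mul
    (hb.comp (Real.exp (-σ) • ContinuousLinearMap.id ℝ (Ed d)).hasTemperateGrowth)

lemma hasTemperateGrowth_commCoef (hb : (fun x => b x j k).HasTemperateGrowth) :
    (fun x => commCoef d b x j k).HasTemperateGrowth :=
  ((Function.HasTemperateGrowth.const (2 : ℝ)).mul hb).sub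
    ((ContinuousLinearMap.id ℝ (Ed d →L[ℝ] ℝ)).bilinear_hasTemperateGrowth
      (hasTemperateGrowth_fderiv hb) Function.HasTemperateGrowth.id)

lemma hasDerivAt_dilCoef (hb : Differentiable ℝ fun x => b x j k) (x : Ed d) (σ : ℝ) :
    HasDerivAt (fun τ => dilCoef d τ b x j k) (dilCoef d σ (commCoef d b) x j k) σ := by
  have hfactor : HasDerivAt (fun τ : ℝ => Real.exp (2 * τ)) (Real.exp (2 * σ) * 2) σ := by
    simpa using ((hasDerivAt_id σ).const_mul 2).exp
  have hpoint : HasDerivAt (fun τ : ℝ => Real.exp (-τ) • x) ((Real.exp (-σ) * -1) • x) σ :=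
    (hasDerivAt_neg σ).exp.smul_const x
  refine (hfactor.mul ((hb _).hasFDerivAt.comp_hasDerivAt σ hpoint)).congr_deriv ?_
  simp only [dilCoef, commCoef, xdotOp, map_smul, smul_eq_mul, Function.comp_apply]
  ring

lemma exists_abs_dilCoef_le (hb : (fun x => b x j k).HasTemperateGrowth) (T : ℝ) :
    ∃ (n : ℕ) (C : ℝ), ∀ σ, |σ| ≤ T → ∀ x, |dilCoef d σ b x j k| ≤ C * (1 + ‖x‖) ^ n := by
  obtain ⟨n, C, hC, hbound⟩ := hb.norm_iteratedFDeriv_le_uniform 0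
  have hb_le (x : Ed d) : |b x j k| ≤ C * (1 + ‖x‖) ^ n := by
    simpa only [norm_iteratedFDeriv_zero] using! hbound 0 le_rfl x
  refine ⟨n, Real.exp (2 * T) * (C * Real.exp T ^ n), fun σ hσ x => ?_⟩
  have hσT := abs_le.1 hσ
  have hone : 1 ≤ Real.exp T := Real.one_le_exp ((abs_nonneg σ).trans hσ)
  have hx : 1 + ‖Real.exp (-σ) • x‖ ≤ Real.exp T * (1 + ‖x‖) := by
    rw [norm_smul, Real.norm_eq_abs, Real.abs_exp, mul_add, mul_one]
    gcongr
    linarith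
  calc |dilCoef d σ b x j k| = Real.exp (2 * σ) * |b (Real.exp (-σ) • x) j k| := by
        rw [dilCoef, abs_mul, Real.abs_exp]
    _ ≤ Real.exp (2 * T) * (C * (1 + ‖Real.exp (-σ) • x‖) ^ n) := by
        gcongr
        · exact hσT.2
        · exact hb_le _
    _ ≤ Real.exp (2 * T) * (C * (Real.exp T * (1 + ‖x‖)) ^ n) := by gcongr
    _ = Real.exp (2 * T) * (C * Real.exp T ^ n) * (1 + ‖x‖) ^ n := by
        rw [mul_pow]
        ring

end

end Coefficients

section Duhamel

lemma norm_formDensity_le (b : Ed d → Fin d → Fin d → ℝ) (u v : Ed d → ℂ) (x : Ed d) :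
    ‖formDensity d b u v x‖ ≤ ∑ j, ∑ k, |b x j k| * (‖pd d k u x‖ * ‖pd d j v x‖) := by
  refine norm_sum_le_of_le _ fun j _ => norm_sum_le_of_le _ fun k _ => ?_
  rw [norm_mul, norm_mul, Complex.norm_real, Real.norm_eq_abs, RCLike.norm_conj]

lemma exists_integrable_bound_formDensity_dilCoef {b : Ed d → Fin d → Fin d → ℝ}
    (hb : ∀ j k, (fun x => b x j k).HasTemperateGrowth) (f g : SchwartzMap (Ed d) ℂ) (T : ℝ) :
    ∃ bound : Ed d → ℝ, Integrable bound ∧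
      ∀ σ, |σ| ≤ T → ∀ x, ‖formDensity d (dilCoef d σ b) f g x‖ ≤ bound x := by
  choose n C hC using fun j k => exists_abs_dilCoef_le (hb j k) T
  refine ⟨fun x => ∑ j, ∑ k, C j k * (1 + ‖x‖) ^ n j k * (‖pd d k f x‖ * ‖pd d j g x‖),
    integrable_finsetSum _ fun j _ => integrable_finsetSum _ fun k _ => ?_, fun σ hσ x => ?_⟩
  · simpa only [SchwartzMap.pairing_apply_apply, conjMulCLM_apply, norm_mul, RCLike.norm_conj,
      coe_pdSchwartz, mul_assoc] using (integrable_one_add_norm_pow_mul volume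
        (SchwartzMap.pairing conjMulCLM (pdSchwartz k f) (pdSchwartz j g)) (n j k)).const_mul
        (C j k)
  · refine (norm_formDensity_le _ _ _ x).trans ?_
    exact Finset.sum_le_sum fun j _ => Finset.sum_le_sum fun k _ =>
      mul_le_mul_of_nonneg_right (hC j k σ hσ x) (by positivity)

lemma continuous_formDensity_dilCoef {b : Ed d → Fin d → Fin d → ℝ}
    (hb : ∀ j k, Continuous fun x => b x j k) (f g : SchwartzMap (Ed d) ℂ) :
    Continuous fun p : ℝ × Ed d => formDensity d (dilCoef d p.1 b) f g p.2 := by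
  have hpd (u : SchwartzMap (Ed d) ℂ) (j : Fin d) : Continuous (pd d j u) :=
    (pdSchwartz j u).continuous
  unfold formDensity dilCoef
  have hcoef (j k : Fin d) : Continuous fun p : ℝ × Ed d => b (Real.exp (-p.1) • p.2) j k :=
    (hb j k).comp (by fun_prop)
  refine continuous_finsetSum _ fun j _ => continuous_finsetSum _ fun k _ => ?_
  exact (Complex.continuous_ofReal.comp ((Real.continuous_exp.comp (by fun_prop)).mul
    (hcoef j k))).mul ((Complex.continuous_conj.comp ((hpd f k).comp continuous_snd)).mul
      ((hpd g j).comp continuous_snd))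

lemma pairL2_divGrad_dilCoef_sub {G : Ed d → Fin d → Fin d → ℝ}
    (hG : ∀ j k, (fun x => G x j k).HasTemperateGrowth) (f g : SchwartzMap (Ed d) ℂ) (T : ℝ) :
    pairL2 d (divGrad d (dilCoef d T G) f) g - pairL2 d (divGrad d G f) g =
      ∫ σ in (0 : ℝ)..T, pairL2 d (divGrad d (dilCoef d σ (commCoef d G)) f) g := by
  have hcomm (j k : Fin d) := hasTemperateGrowth_commCoef (hG j k)
  have hGσ (σ : ℝ) (j k : Fin d) := hasTemperateGrowth_dilCoef σ (hG j k)
  have hcommσ (σ : ℝ) (j k : Fin d) := hasTemperateGrowth_dilCoef σ (hcomm j k)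
  obtain ⟨bound, hint, hbound⟩ :=
    exists_integrable_bound_formDensity_dilCoef hcomm f g |T|
  have hderiv (x : Ed d) (σ : ℝ) : HasDerivAt (fun τ => formDensity d (dilCoef d τ G) f g x)
      (formDensity d (dilCoef d σ (commCoef d G)) f g x) σ :=
    HasDerivAt.fun_sum fun j _ => HasDerivAt.fun_sum fun k _ =>
      ((hasDerivAt_dilCoef ((hG j k).1.differentiable (by simp)) x σ).ofReal_comp).mul_const _
  have hσ_le (σ : ℝ) (hσ : σ ∈ Set.uIoc 0 T) : |σ| ≤ |T| := by
    simpa only [sub_zero] using Set.abs_sub_left_of_mem_uIcc (Set.uIoc_subset_uIcc hσ)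
  nth_rw 2 [← dilCoef_zero G]
  simp only [pairL2_divGrad_left (hGσ _), pairL2_divGrad_left (hcommσ _)]
  rw [← integral_sub (integrable_formDensity (hGσ T) f g) (integrable_formDensity (hGσ 0) f g)]
  exact (intervalIntegral_integral_deriv_eq_integral_sub (fun x σ _ => hderiv x σ)
    (continuous_formDensity_dilCoef (fun j k => (hcomm j k).1.continuous) f g).aestronglyMeasurable
    (fun x σ hσ => hbound σ (hσ_le σ hσ) x) hint).symm

theorem pairL2_dil_divGrad_sub_eq_integral {G : Ed d → Fin d → Fin d → ℝ}
    (hG : ∀ j k, (fun x => G x j k).HasTemperateGrowth) (hsymm : SymmetricCoef d G)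
    (u₁ u₂ : SchwartzMap (Ed d) ℂ) (T : ℝ) :
    pairL2 d (dil d T u₁) (divGrad d G u₂) - pairL2 d (divGrad d G u₁) (dil d (-T) u₂) =
      ∫ σ in (0 : ℝ)..T, pairL2 d (dil d T (ptauFun d G σ u₁)) u₂ := by
  have hfirst : pairL2 d (dil d T u₁) (divGrad d G u₂) =
      pairL2 d (divGrad d (dilCoef d T G) u₁) (dil d (-T) u₂) := by
    rw [← coe_dilSchwartz, pairL2_divGrad_comm hG _ _ hsymm, coe_dilSchwartz, divGrad_dil,
      pairL2_dil_left]
  simp only [hfirst, pairL2_dil_left, ptauFun_eq_divGrad]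
  simpa only [coe_dilSchwartz] using pairL2_divGrad_dilCoef_sub hG u₁ (dilSchwartz (-T) u₂) T

end Duhamel

section Bound

lemma abs_dilCoef_mul_exp_neg_le {b : Ed d → Fin d → Fin d → ℝ} {j k : Fin d} {C : ℝ}
    (hC : ∀ x, |b x j k| ≤ C * (1 + ‖x‖)) {σ T : ℝ} (hσ : σ ∈ Set.uIcc 0 T) (x : Ed d) :
    |dilCoef d σ b x j k| * Real.exp (-T) ≤ C * Real.exp |T| * (1 + ‖x‖) := by
  have hC0 : 0 ≤ C := by simpa using (abs_nonneg _).trans (hC 0)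
  have hexponents : 2 * σ - T ≤ |T| ∧ σ - T ≤ |T| := by
    rcases Set.mem_uIcc.1 hσ with h | h <;> constructor <;>
      linarith [le_abs_self T, neg_abs_le T]
  calc |dilCoef d σ b x j k| * Real.exp (-T)
      = Real.exp (2 * σ - T) * |b (Real.exp (-σ) • x) j k| := by
        rw [dilCoef, abs_mul, Real.abs_exp, sub_eq_add_neg, Real.exp_add]
        ring
    _ ≤ Real.exp (2 * σ - T) * (C * (1 + ‖Real.exp (-σ) • x‖)) := by
        gcongr
        exact hC _
    _ = C * (Real.exp (2 * σ - T) + Real.exp (σ - T) * ‖x‖) := by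
        have hexp : Real.exp (σ - T) = Real.exp (2 * σ - T) * Real.exp (-σ) := by
          rw [← Real.exp_add]
          ring_nf
        rw [norm_smul, Real.norm_eq_abs, Real.abs_exp, hexp]
        ring
    _ ≤ C * (Real.exp |T| + Real.exp |T| * ‖x‖) := by
        gcongr
        · exact hexponents.1
        · exact hexponents.2
    _ = C * Real.exp |T| * (1 + ‖x‖) := by ring

lemma norm_formDensity_dilCoef_dil_le {b : Ed d → Fin d → Fin d → ℝ} {C : Fin d → Fin d → ℝ}
    (hC : ∀ j k x, |b x j k| ≤ C j k * (1 + ‖x‖)) {σ T : ℝ} (hσ : σ ∈ Set.uIcc 0 T)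
    (u v : Ed d → ℂ) (x : Ed d) :
    ‖formDensity d (dilCoef d σ b) u (dil d (-T) v) x‖ ≤ Real.exp |T| * ∑ j, ∑ k, C j k *
      ((1 + ‖x‖) ^ 2 * ‖pd d k u x‖ ^ 2 + ‖dil d (-T) (pd d j v) x‖ ^ 2) := by
  refine (norm_formDensity_le _ _ _ x).trans ?_
  simp only [Finset.mul_sum]
  refine Finset.sum_le_sum fun j _ => Finset.sum_le_sum fun k _ => ?_
  have hC0 : 0 ≤ C j k := by simpa using (abs_nonneg _).trans (hC j k 0)
  set p := ‖pd d k u x‖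
  set q := ‖dil d (-T) (pd d j v) x‖
  have hnorm : ‖pd d j (dil d (-T) v) x‖ = Real.exp (-T) * q := by
    rw [pd_dil, norm_mul, Complex.norm_real, Real.norm_eq_abs, Real.abs_exp]
  have hamgm : (1 + ‖x‖) * p * q ≤ (1 + ‖x‖) ^ 2 * p ^ 2 + q ^ 2 := by
    nlinarith [two_mul_le_add_sq ((1 + ‖x‖) * p) q, sq_nonneg ((1 + ‖x‖) * p), sq_nonneg q]
  calc |dilCoef d σ b x j k| * (p * ‖pd d j (dil d (-T) v) x‖)
      = |dilCoef d σ b x j k| * Real.exp (-T) * (p * q) := by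
        rw [hnorm]
        ring
    _ ≤ C j k * Real.exp |T| * (1 + ‖x‖) * (p * q) := by
        gcongr ?_ * (p * q)
        exact abs_dilCoef_mul_exp_neg_le (hC j k) hσ x
    _ = Real.exp |T| * (C j k * ((1 + ‖x‖) * p * q)) := by ring
    _ ≤ Real.exp |T| * (C j k * ((1 + ‖x‖) ^ 2 * p ^ 2 + q ^ 2)) := by gcongr

lemma integrable_one_add_norm_pow_mul_norm_sq (f : SchwartzMap (Ed d) ℂ) (n : ℕ) :
    Integrable fun x => (1 + ‖x‖) ^ n * ‖f x‖ ^ 2 := by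
  simpa only [SchwartzMap.pairing_apply_apply, conjMulCLM_apply, norm_mul, RCLike.norm_conj,
    ← sq] using integrable_one_add_norm_pow_mul volume (SchwartzMap.pairing conjMulCLM f f) n

lemma exists_norm_pairL2_divGrad_dilCoef_le {b : Ed d → Fin d → Fin d → ℝ}
    (hb : ∀ j k, (fun x => b x j k).HasTemperateGrowth)
    (hlin : ∀ j k, ∃ C, ∀ x, |b x j k| ≤ C * (1 + ‖x‖)) (f g : SchwartzMap (Ed d) ℂ) :
    ∃ K : ℝ, ∀ T : ℝ, ∀ σ ∈ Set.uIcc 0 T,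
      ‖pairL2 d (divGrad d (dilCoef d σ b) f) (dil d (-T) g)‖ ≤ K * Real.exp |T| := by
  choose C hC using hlin
  refine ⟨∑ j, ∑ k, C j k *
    ((∫ x, (1 + ‖x‖) ^ 2 * ‖pd d k f x‖ ^ 2) + ∫ x, ‖pd d j g x‖ ^ 2), fun T σ hσ => ?_⟩
  have hint_f (k : Fin d) : Integrable fun x => (1 + ‖x‖) ^ 2 * ‖pd d k f x‖ ^ 2 :=
    integrable_one_add_norm_pow_mul_norm_sq (pdSchwartz k f) 2
  have hint_g (j : Fin d) : Integrable fun x => ‖dil d (-T) (pd d j g) x‖ ^ 2 := by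
    simpa only [coe_dilSchwartz, coe_pdSchwartz, pow_zero, one_mul] using
      integrable_one_add_norm_pow_mul_norm_sq (dilSchwartz (-T) (pdSchwartz j g)) 0
  have hint (j k : Fin d) : Integrable fun x =>
      C j k * ((1 + ‖x‖) ^ 2 * ‖pd d k f x‖ ^ 2 + ‖dil d (-T) (pd d j g) x‖ ^ 2) :=
    ((hint_f k).add (hint_g j)).const_mul (C j k)
  rw [← coe_dilSchwartz, pairL2_divGrad_left fun j k => hasTemperateGrowth_dilCoef σ (hb j k),
    coe_dilSchwartz]
  refine (norm_integral_le_of_norm_le ((integrable_finsetSum _ fun j _ =>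
    integrable_finsetSum _ fun k _ => hint j k).const_mul (Real.exp |T|))
    (Eventually.of_forall (norm_formDensity_dilCoef_dil_le hC hσ f g))).trans_eq ?_
  rw [integral_const_mul, mul_comm, integral_finsetSum _ fun j _ =>
    integrable_finsetSum _ fun k _ => hint j k]
  congr 1
  refine Finset.sum_congr rfl fun j _ => ?_
  rw [integral_finsetSum _ fun k _ => hint j k]
  refine Finset.sum_congr rfl fun k _ => ?_
  rw [integral_const_mul, integral_add (hint_f k) (hint_g j), integral_norm_sq_dil]

theorem exists_norm_pairL2_dil_divGrad_sub_le {G : Ed d → Fin d → Fin d → ℝ}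
    (hG : ∀ j k, (fun x => G x j k).HasTemperateGrowth) (hsymm : SymmetricCoef d G)
    (hlin : ∀ j k, ∃ C, ∀ x, |commCoef d G x j k| ≤ C * (1 + ‖x‖))
    (u₁ u₂ : SchwartzMap (Ed d) ℂ) :
    ∃ K : ℝ, ∀ T : ℝ,
      ‖pairL2 d (dil d T u₁) (divGrad d G u₂) - pairL2 d (divGrad d G u₁) (dil d (-T) u₂)‖ ≤
        K * Real.exp |T| * |T| := by
  obtain ⟨K, hK⟩ := exists_norm_pairL2_divGrad_dilCoef_le
    (fun j k => hasTemperateGrowth_commCoef (hG j k)) hlin u₁ u₂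
  refine ⟨K, fun T => ?_⟩
  rw [pairL2_dil_divGrad_sub_eq_integral hG hsymm]
  simp only [pairL2_dil_left, ptauFun_eq_divGrad]
  simpa only [sub_zero] using intervalIntegral.norm_integral_le_of_norm_le_const fun σ hσ =>
    hK T σ (Set.uIoc_subset_uIcc hσ)

end Bound

lemma hasTemperateGrowth_of_cbSmooth {a : Ed d → ℝ} (ha : CbSmooth d a) : a.HasTemperateGrowth :=
  ⟨ha.1, fun n => ⟨0, (ha.2 n).imp fun C hC x => by simpa using hC x⟩⟩

lemma exists_abs_commCoef_le_of_cbSmooth {G : Ed d → Fin d → Fin d → ℝ} {j k : Fin d}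
    (hG : CbSmooth d fun x => G x j k) : ∃ C, ∀ x, |commCoef d G x j k| ≤ C * (1 + ‖x‖) := by
  obtain ⟨C₀, hC₀⟩ := hG.2 0
  obtain ⟨C₁, hC₁⟩ := hG.2 1
  simp only [norm_iteratedFDeriv_zero, norm_iteratedFDeriv_one, Real.norm_eq_abs] at hC₀ hC₁
  have hC₀_nonneg : 0 ≤ C₀ := (abs_nonneg _).trans (hC₀ 0)
  have hC₁_nonneg : 0 ≤ C₁ := (norm_nonneg _).trans (hC₁ 0)
  refine ⟨2 * C₀ + C₁, fun x => ?_⟩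
  have hderiv : |xdotOp d (fun y => G y j k) x| ≤ C₁ * ‖x‖ :=
    (fderiv ℝ (fun y => G y j k) x).le_of_opNorm_le (hC₁ x) x
  calc |commCoef d G x j k| ≤ 2 * |G x j k| + |xdotOp d (fun y => G y j k) x| :=
        (abs_sub _ _).trans_eq (by rw [abs_mul, abs_two])
    _ ≤ 2 * C₀ + C₁ * ‖x‖ := by
        gcongr
        exact hC₀ x
    _ ≤ (2 * C₀ + C₁) * (1 + ‖x‖) := by nlinarith [norm_nonneg x]

theorem statement10_general {G : Ed d → Fin d → Fin d → ℝ}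
    (hG : ∀ j k, (fun x => G x j k).HasTemperateGrowth) (hsymm : SymmetricCoef d G) (h : ℝ)
    (u₁ u₂ : SchwartzMap (Ed d) ℂ) :
    (∀ t : ℝ,
      pairL2 d (dil d (t * h) u₁) (divGrad d G u₂)
          - pairL2 d (divGrad d G u₁) (dil d (-(t * h)) u₂)
        = h * ∫ s in (0 : ℝ)..t, pairL2 d (dil d (t * h) (ptauFun d G (s * h) u₁)) u₂) ∧
    ((∀ j k, ∃ C, ∀ x, |commCoef d G x j k| ≤ C * (1 + ‖x‖)) →
      ∃ C : ℝ, ∀ t : ℝ,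
        ‖pairL2 d (dil d (t * h) u₁) (divGrad d G u₂)
            - pairL2 d (divGrad d G u₁) (dil d (-(t * h)) u₂)‖
          ≤ C * |t| * Real.exp (|h| * |t|)) := by
  refine ⟨fun t => ?_, fun hlin => ?_⟩
  · rw [pairL2_dil_divGrad_sub_eq_integral hG hsymm, ← Complex.real_smul,
      intervalIntegral.smul_integral_comp_mul_right
        (fun σ => pairL2 d (dil d (t * h) (ptauFun d G σ u₁)) u₂), zero_mul]
  · obtain ⟨K, hK⟩ := exists_norm_pairL2_dil_divGrad_sub_le hG hsymm hlin u₁ u₂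
    refine ⟨K * |h|, fun t => (hK (t * h)).trans_eq ?_⟩
    rw [abs_mul, mul_comm |t|]
    ring

/-- **Lemma (Duhamel formula for the dilated commutator).** For all `t ∈ ℝ`, `h > 0`
and `u₁, u₂ ∈ 𝒮(ℝ^d)`:
`(e^{ithA}u₁, Pu₂) - (Pu₁, e^{-ithA}u₂) = h ∫₀^t (e^{ithA} P_{sh} u₁, u₂) ds`, and for
each pair `u₁, u₂` there is `C` with
`|(e^{ithA}u₁, Pu₂) - (Pu₁, e^{-ithA}u₂)| ≤ C |t| e^{h|t|}` for all `t ∈ ℝ`. -/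
theorem statement10 (d : ℕ) (G : Ed d → Fin d → Fin d → ℝ) (hG : Standing d G)
    (h : ℝ) (hh : 0 < h) (u₁ u₂ : SchwartzMap (Ed d) ℂ) :
    (∀ t : ℝ,
      pairL2 d (dil d (t * h) ⇑u₁) (divGrad d G ⇑u₂)
          - pairL2 d (divGrad d G ⇑u₁) (dil d (-(t * h)) ⇑u₂)
        = (h : ℂ) * ∫ s in (0:ℝ)..t, pairL2 d (dil d (t * h) (ptauFun d G (s * h) ⇑u₁)) ⇑u₂) ∧
    ∃ C : ℝ, ∀ t : ℝ,
      ‖pairL2 d (dil d (t * h) ⇑u₁) (divGrad d G ⇑u₂)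
          - pairL2 d (divGrad d G ⇑u₁) (dil d (-(t * h)) ⇑u₂)‖
        ≤ C * |t| * Real.exp (h * |t|) := by
  obtain ⟨hformula, hbound⟩ := statement10_general
    (fun j k => hasTemperateGrowth_of_cbSmooth (hG.1 j k)) hG.2.1 h u₁ u₂
  rw [abs_of_pos hh] at hbound
  exact ⟨hformula, hbound fun j k => exists_abs_commCoef_le_of_cbSmooth (hG.1 j k)⟩

end
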